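/- Let φ be a finite complex Borel measure on the unit circle 𝕋, let 1 ≤ m ≤ n, and assume D_j[φ] ≠ 0 for every j with n−m ≤ j ≤ n−1. For z_1,…,z_m ∈ ℂ let T̃_n[φ; z_1,…,z_m] denote the determinant of the n×n matrix whose (j,k) entry (indices starting at 1) equals φ_{j−k} for 1 ≤ k ≤ n−m and equals z_{k−(n−m)}^{j−1} for n−m+1 ≤ k ≤ n (this is the bordered Toeplitz determinant built from the reflected measure φ̃ with φ̃_j = φ_{−j}). Then T̃_n[φ; z_1,…,z_m] = D_{n−m}[φ] · det( q̂_{n−m+i−1}(z_k) )_{i,k=1}^{m}, where q̂_k is the k-th monic bi-orthogonal polynomial of the second kind. (This is the second identity of Proposition 1.2 of the paper, stated with monic normalizations.) -/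

import Mathlib

open MeasureTheory Matrix

noncomputable instance : MeasurableSpace Circle := borel Circle

/-- The `j`-th Fourier coefficient `φ_j = ∫_𝕋 ζ^{-j} dφ(ζ)` of the finite complex Borel
measure `dφ = f dσ` on the unit circle. -/
noncomputable def fcoef (σ : Measure Circle) (f : Circle → ℂ) (j : ℤ) : ℂ :=
  ∫ z, ((z : ℂ) ^ (-j)) * f z ∂σ

/-- The `n × n` Toeplitz determinant `D_n[φ] = det (φ_{j-k})_{j,k=0}^{n-1}` (with `D_0[φ] = 1`). -/
noncomputable def toeplitzDet (σ : Measure Circle) (f : Circle → ℂ) (n : ℕ) : ℂ :=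
  Matrix.det (Matrix.of fun j k : Fin n => fcoef σ f ((j : ℤ) - (k : ℤ)))

/-- The `k`-th monic bi-orthogonal polynomial of the second kind, `q̂_k(z) = Â_k(z)/D_k[φ]`,
where `Â_k(z)` is the determinant of the `(k+1) × (k+1)` matrix whose first `k` columns are
`(φ_{i-j})_{0 ≤ i ≤ k, 0 ≤ j ≤ k-1}` and whose last column is `(1, z, …, z^k)ᵀ`. -/
noncomputable def monicBOP₂ (σ : Measure Circle) (f : Circle → ℂ) (k : ℕ) (z : ℂ) : ℂ :=
  (Matrix.det (Matrix.of fun i j : Fin (k + 1) =>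
      if (j : ℕ) < k then fcoef σ f ((i : ℤ) - (j : ℤ)) else z ^ (i : ℕ))) /
    toeplitzDet σ f k

/-!
The numerator of `q̂_k(z)` is a linear functional of its last column `(1, z, …, z^k)`. It vanishes
on the columns `0, …, k - 1` of the Toeplitz array, and the coefficient of the bottom entry `z^k`
is `D_k`. Applying the functionals with `k = n - m, …, n - 1` as row operations therefore
multiplies the bordered determinant by `D_{n-m} ⋯ D_{n-1}` and makes it block upper triangular,
with diagonal blocks the Toeplitz matrix of size `n - m` and the matrix of numerators at the
border points.
-/

section BorderedMinors

variable {R : Type*} [CommRing R]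

/-- The determinant of the top left `k × k` block of the infinite array `a`. For
`a i j = φ_{i-j}` it is the Toeplitz determinant `D_k[φ]`. -/
def leadingMinor (a : ℕ → ℕ → R) (k : ℕ) : R :=
  det (of fun i j : Fin k => a i j)

/-- The determinant of the top left `(k + 1) × (k + 1)` block of `a` with its last column replaced
by the initial segment of `v`. For `a i j = φ_{i-j}` and `v i = z ^ i` it is the numerator
`Â_k(z)` of `q̂_k(z)`. -/
def borderedMinor (a : ℕ → ℕ → R) (k : ℕ) (v : ℕ → R) : R :=
  det (of fun i j : Fin (k + 1) => if (j : ℕ) < k then a i j else v i)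

/-- The square matrix consisting of the first `r` columns of `a` followed by the `m` columns
`V 0, …, V (m - 1)`, all truncated to `r + m` rows. -/
def multiBorderedMatrix (a : ℕ → ℕ → R) (r : ℕ) {m : ℕ} (V : Fin m → ℕ → R) :
    Matrix (Fin (r + m)) (Fin (r + m)) R :=
  of fun i => Fin.append (fun j : Fin r => a i j) (fun j => V j i)

/-- The row operations that make `multiBorderedMatrix a r V` block triangular: the first `r` rows
are kept, and row `r + i` becomes the value of `borderedMinor a (r + i)` on each column, so that
the entries of the operator are the values of this functional on the standard basis. -/
def borderedRowOp (a : ℕ → ℕ → R) (r m : ℕ) : Matrix (Fin (r + m)) (Fin (r + m)) R :=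
  of <| Fin.addCases (fun i => Pi.single (Fin.castAdd m i) 1)
    (fun i j => borderedMinor a (r + i) (Pi.single (j : ℕ) 1))

theorem borderedMinor_eq_cramer (a : ℕ → ℕ → R) (k : ℕ) (v : ℕ → R) :
    borderedMinor a k v =
      cramer (of fun i j : Fin (k + 1) => a i j) (fun i => v i) (Fin.last k) := by
  rw [borderedMinor, cramer_apply]
  congr 1
  ext i j
  refine Fin.lastCases ?_ (fun j => ?_) j <;> simp [Fin.castSucc_ne_last]

theorem borderedMinor_column_eq_zero (a : ℕ → ℕ → R) {k l : ℕ} (hl : l < k) :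
    borderedMinor a k (fun i => a i l) = 0 :=
  det_zero_of_column_eq (i := Fin.castSucc ⟨l, hl⟩) (j := Fin.last k) (Fin.castSucc_ne_last _)
    fun i => by simp [hl]

theorem borderedMinor_single_of_lt (a : ℕ → ℕ → R) {k j : ℕ} (hj : k < j) :
    borderedMinor a k (Pi.single j 1) = 0 :=
  det_eq_zero_of_column_eq_zero (Fin.last k) fun i => by
    simp [Pi.single_eq_of_ne (i.is_le.trans_lt hj).ne]

theorem borderedMinor_single_self (a : ℕ → ℕ → R) (k : ℕ) :
    borderedMinor a k (Pi.single k 1) = leadingMinor a k := by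
  rw [borderedMinor, det_succ_column _ (Fin.last k), Fin.sum_univ_castSucc]
  have hoff (i : Fin k) : (Pi.single k 1 : ℕ → R) i = 0 := Pi.single_eq_of_ne i.isLt.ne _
  simp [hoff, ← two_mul, leadingMinor, submatrix]

theorem borderedMinor_eq_sum_succ (a : ℕ → ℕ → R) (k : ℕ) (v : ℕ → R) :
    borderedMinor a k v =
      ∑ j : Fin (k + 1), borderedMinor a k (Pi.single (j : ℕ) 1) * v j := by
  have hbasis (j : Fin (k + 1)) : (fun i : Fin (k + 1) => (Pi.single (j : ℕ) 1 : ℕ → R) i) =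
      fun i => if j = i then 1 else 0 := by
    simp [Pi.single_apply, Fin.ext_iff, eq_comm]
  simp only [borderedMinor_eq_cramer, hbasis]
  simpa [mul_comm] using LinearMap.pi_apply_eq_sum_univ
    (LinearMap.proj (Fin.last k) ∘ₗ cramer (of fun i j : Fin (k + 1) => a i j)) (fun i => v i)

theorem borderedMinor_eq_sum_of_lt (a : ℕ → ℕ → R) {k n : ℕ} (hkn : k < n) (v : ℕ → R) :
    borderedMinor a k v = ∑ j : Fin n, borderedMinor a k (Pi.single (j : ℕ) 1) * v j := by
  let c : ℕ → R := fun j => borderedMinor a k (Pi.single j 1) * v j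
  calc borderedMinor a k v
    _ = ∑ j : Fin (k + 1), c j := borderedMinor_eq_sum_succ a k v
    _ = ∑ j ∈ Finset.range (k + 1), c j := Fin.sum_univ_eq_sum_range c (k + 1)
    _ = ∑ j ∈ Finset.range n, c j := by
        refine Finset.sum_subset (Finset.range_mono hkn) fun j _ hj => ?_
        have hkj : k < j := by simpa using hj
        simp only [c, borderedMinor_single_of_lt a hkj, zero_mul]
    _ = ∑ j : Fin n, c j := (Fin.sum_univ_eq_sum_range c n).symm

theorem det_borderedRowOp (a : ℕ → ℕ → R) (r m : ℕ) :
    (borderedRowOp a r m).det = ∏ i : Fin m, leadingMinor a (r + i) := by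
  rw [det_of_isLowerTriangular, Fin.prod_univ_add]
  · simp [borderedRowOp, borderedMinor_single_self]
  · intro i j (hij : i < j)
    induction i using Fin.addCases with
    | left i => simp [borderedRowOp, hij.ne']
    | right i => simpa [borderedRowOp] using borderedMinor_single_of_lt a hij

theorem borderedRowOp_mul_multiBorderedMatrix (a : ℕ → ℕ → R) (r : ℕ) {m : ℕ}
    (V : Fin m → ℕ → R) :
    (borderedRowOp a r m * multiBorderedMatrix a r V).submatrix finSumFinEquiv finSumFinEquiv =
      fromBlocks (of fun i j : Fin r => a i j) (of fun (i : Fin r) k => V k i)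
        0 (of fun i k : Fin m => borderedMinor a (r + i) (V k)) := by
  have hrow (i : Fin m) (v : ℕ → R) :
      ∑ j, borderedRowOp a r m (Fin.natAdd r i) j * v j = borderedMinor a (r + i) v := by
    simp [borderedRowOp, borderedMinor_eq_sum_of_lt a (Nat.add_lt_add_left i.isLt r) v]
  ext (i | i) (k | k)
  · simp [mul_apply, borderedRowOp, multiBorderedMatrix, Pi.single_apply]
  · simp [mul_apply, borderedRowOp, multiBorderedMatrix, Pi.single_apply]
  · simpa [mul_apply, multiBorderedMatrix, hrow i fun j => a j k] using
      borderedMinor_column_eq_zero a (Nat.lt_add_right i k.isLt)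
  · simpa [mul_apply, multiBorderedMatrix] using hrow i (V k)

theorem prod_leadingMinor_mul_det_multiBorderedMatrix (a : ℕ → ℕ → R) (r : ℕ) {m : ℕ}
    (V : Fin m → ℕ → R) :
    (∏ i : Fin m, leadingMinor a (r + i)) * (multiBorderedMatrix a r V).det =
      leadingMinor a r * det (of fun i k : Fin m => borderedMinor a (r + i) (V k)) := by
  rw [← det_borderedRowOp, ← det_mul, ← det_submatrix_equiv_self finSumFinEquiv,
    borderedRowOp_mul_multiBorderedMatrix, det_fromBlocks_zero₂₁, leadingMinor]

end BorderedMinors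

section Field

variable {K : Type*} [Field K]

theorem det_multiBorderedMatrix (a : ℕ → ℕ → K) (r : ℕ) {m : ℕ}
    (ha : ∀ i : Fin m, leadingMinor a (r + i) ≠ 0) (V : Fin m → ℕ → K) :
    (multiBorderedMatrix a r V).det = leadingMinor a r *
      det (of fun i k : Fin m => borderedMinor a (r + i) (V k) / leadingMinor a (r + i)) := by
  have hprod : ∏ i : Fin m, leadingMinor a (r + i) ≠ 0 := Finset.prod_ne_zero_iff.2 fun i _ => ha i
  have hclear : (∏ i : Fin m, leadingMinor a (r + i)) *
      det (of fun i k : Fin m => borderedMinor a (r + i) (V k) / leadingMinor a (r + i)) =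
        det (of fun i k : Fin m => borderedMinor a (r + i) (V k)) := by
    rw [← det_mul_column]
    simp only [of_apply, mul_div_cancel₀ _ (ha _)]
  apply mul_left_cancel₀ hprod
  rw [prod_leadingMinor_mul_det_multiBorderedMatrix, mul_left_comm, hclear]

theorem bordered_toeplitz_reflected_eq_biorthopoly_det_general (a : ℕ → ℕ → K) {n m : ℕ}
    (hmn : m ≤ n) (ha : ∀ j, n - m ≤ j → j < n → leadingMinor a j ≠ 0) (V : Fin m → ℕ → K) :
    det (of fun j k : Fin n =>
      if hk : (k : ℕ) < n - m then a j k else V ⟨k - (n - m), by omega⟩ j) =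
    leadingMinor a (n - m) * det (of fun i k : Fin m =>
      borderedMinor a (n - m + i) (V k) / leadingMinor a (n - m + i)) := by
  obtain ⟨r, rfl⟩ := Nat.exists_eq_add_of_le' hmn
  simp only [Nat.add_sub_cancel] at ha ⊢
  rw [← det_multiBorderedMatrix a r (fun i => ha _ (by omega) (by omega))]
  congr 1
  ext j k
  refine Fin.addCases (fun k => ?_) (fun k => ?_) k <;> simp [multiBorderedMatrix]

end Field

/-- Proposition 1.2 (second identity): the multi-bordered Toeplitz determinant associated with
the reflected measure `φ̃` (with `φ̃_j = φ_{-j}`) equals `D_{n-m}[φ]` times the determinant of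
the matrix of monic bi-orthogonal polynomials of the second kind evaluated at the border
points. -/
theorem bordered_toeplitz_reflected_eq_biorthopoly_det
    (σ : Measure Circle) [IsFiniteMeasure σ] (f : Circle → ℂ) (hf : Integrable f σ)
    (n m : ℕ) (hm : 1 ≤ m) (hmn : m ≤ n)
    (hD : ∀ j : ℕ, n - m ≤ j → j ≤ n - 1 → toeplitzDet σ f j ≠ 0)
    (z : Fin m → ℂ) :
    Matrix.det (Matrix.of fun j k : Fin n =>
      if hk : (k : ℕ) < n - m then fcoef σ f ((j : ℤ) - (k : ℤ))
      else z ⟨(k : ℕ) - (n - m), by have := k.isLt; omega⟩ ^ (j : ℕ)) =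
    toeplitzDet σ f (n - m) *
      Matrix.det (Matrix.of fun i k : Fin m => monicBOP₂ σ f (n - m + (i : ℕ)) (z k)) :=
  bordered_toeplitz_reflected_eq_biorthopoly_det_general (fun i j => fcoef σ f (i - j)) hmn
    (fun j hj hjn => hD j hj (Nat.le_sub_one_of_lt hjn)) (fun k i => z k ^ i)
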